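/- arXiv:2102.09406 — 2 statements merged into one kernel-verified Lean document; each statement's English description precedes it below -/
import Mathlib

section
/- Let R ∈ ℝ^{n×n} be nonnegative, row-stochastic (R 1 = 1), with positive diagonal entries and irreducible, and let u ∈ ℝ^n be its positive left eigenvector with u^T R = u^T and u^T 1 = 1. Then there exists a constant σ_R with 0 < σ_R < 1 such that for every q ∈ ℕ and every matrix x ∈ ℝ^{n×q}: ‖R x − 1 u^T x‖_F^u ≤ σ_R · ‖x − 1 u^T x‖_F^u. -/
/-- The Frobenius norm of a real matrix. -/
noncomputable def frobNorm {m q : Type*} [Fintype m] [Fintype q]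
    (A : Matrix m q ℝ) : ℝ :=
  Real.sqrt (∑ i, ∑ j, (A i j) ^ 2)

/-- The weighted Frobenius norm `‖A‖_F^u = ‖diag(√u) A‖_F`. -/
noncomputable def frobNormW {n q : Type*} [Fintype n] [Fintype q] [DecidableEq n]
    (w : n → ℝ) (A : Matrix n q ℝ) : ℝ :=
  frobNorm (Matrix.diagonal (fun i => Real.sqrt (w i)) * A)

open Matrix in
lemma var_identity {n : ℕ} (R : Matrix (Fin n) (Fin n) ℝ)
    (hrow : ∀ i, ∑ j, R i j = 1) (u : Fin n → ℝ)
    (huR : Matrix.vecMul u R = u) (y : Fin n → ℝ) :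
    ∑ i, u i * (∑ j, R i j * y j) ^ 2 + ∑ i, ∑ j, u i * (R i j * (y j - ∑ l, R i l * y l) ^ 2)
      = ∑ j, u j * y j ^ 2 := by
  have h1 : ∀ i, ∑ j, u i * (R i j * (y j - ∑ l, R i l * y l) ^ 2)
      = ∑ j, u i * R i j * y j ^ 2 - u i * (∑ j, R i j * y j) ^ 2 := by
    intro i
    set m := ∑ l, R i l * y l with hm
    have : ∀ j, u i * (R i j * (y j - m) ^ 2)
        = u i * R i j * y j ^ 2 - 2 * u i * m * (R i j * y j) + u i * m ^ 2 * R i j := by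
      intro j; ring
    simp_rw [this]
    rw [Finset.sum_add_distrib, Finset.sum_sub_distrib, ← Finset.mul_sum, ← Finset.mul_sum,
      hrow i, ← hm]
    ring
  simp_rw [h1]
  rw [Finset.sum_sub_distrib, Finset.sum_comm (f := fun i j => u i * R i j * y j ^ 2)]
  have h2 : ∀ j, ∑ i, u i * R i j * y j ^ 2 = u j * y j ^ 2 := by
    intro j
    rw [← Finset.sum_mul]
    congr 1
    exact congrFun huR j
  simp_rw [h2]
  ring

lemma strict_contr {n : ℕ} (R : Matrix (Fin n) (Fin n) ℝ)
    (hnonneg : ∀ i j, 0 ≤ R i j)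
    (hrow : ∀ i, ∑ j, R i j = 1)
    (hdiag : ∀ i, 0 < R i i)
    (hirr : ∀ i j, ∃ k : ℕ, 1 ≤ k ∧ 0 < (R ^ k) i j)
    (u : Fin n → ℝ) (hu : ∀ i, 0 < u i)
    (huR : Matrix.vecMul u R = u) (husum : ∑ i, u i = 1)
    (y : Fin n → ℝ) (hy : y ≠ 0) (hy0 : ∑ i, u i * y i = 0) :
    ∑ i, u i * (∑ j, R i j * y j) ^ 2 < ∑ j, u j * y j ^ 2 := by
  have hid := var_identity R hrow u huR y
  have hnn : ∀ i j, 0 ≤ u i * (R i j * (y j - ∑ l, R i l * y l) ^ 2) := fun i j =>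
    mul_nonneg (hu i).le (mul_nonneg (hnonneg i j) (sq_nonneg _))
  have hD : 0 ≤ ∑ i, ∑ j, u i * (R i j * (y j - ∑ l, R i l * y l) ^ 2) :=
    Finset.sum_nonneg fun i _ => Finset.sum_nonneg fun j _ => hnn i j
  rcases hD.lt_or_eq with h | h
  · linarith
  exfalso
  have hz : ∀ i j, u i * (R i j * (y j - ∑ l, R i l * y l) ^ 2) = 0 := by
    intro i j
    have := (Finset.sum_eq_zero_iff_of_nonneg
      (fun i _ => Finset.sum_nonneg fun j _ => hnn i j)).1 h.symm i (Finset.mem_univ _)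
    exact (Finset.sum_eq_zero_iff_of_nonneg (fun j _ => hnn i j)).1 this j (Finset.mem_univ _)
  have he : ∀ i j, 0 < R i j → y j = ∑ l, R i l * y l := by
    intro i j hp
    have h1 := hz i j
    rw [mul_eq_zero, mul_eq_zero] at h1
    rcases h1 with h1 | h1 | h1
    · exact absurd h1 (hu i).ne'
    · exact absurd h1 hp.ne'
    · exact sub_eq_zero.1 (pow_eq_zero_iff two_ne_zero |>.1 h1)
  have he2 : ∀ i j, 0 < R i j → y i = y j := fun i j hp =>
    (he i i (hdiag i)).trans (he i j hp).symm
  have hpow : ∀ k : ℕ, ∀ i j, (R ^ k) i j ≠ 0 → y i = y j := by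
    intro k
    induction k with
    | zero =>
      intro i j hk
      by_cases hij : i = j
      · rw [hij]
      · simp [hij] at hk
    | succ k ih =>
      intro i j hk
      rw [pow_succ, Matrix.mul_apply] at hk
      obtain ⟨l, _, hl⟩ := Finset.exists_ne_zero_of_sum_ne_zero hk
      exact (ih i l (left_ne_zero_of_mul hl)).trans
        (he2 l j (lt_of_le_of_ne (hnonneg l j) (right_ne_zero_of_mul hl).symm))
  apply hy
  funext i
  have hc : ∀ j, y j = y i := fun j => by
    obtain ⟨k, _, hk⟩ := hirr j i
    exact hpow k j i hk.ne'
  simp_rw [hc] at hy0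
  rw [← Finset.sum_mul, husum, one_mul] at hy0
  simpa using hy0

lemma exists_contr {n : ℕ} (R : Matrix (Fin n) (Fin n) ℝ)
    (hnonneg : ∀ i j, 0 ≤ R i j)
    (hrow : ∀ i, ∑ j, R i j = 1)
    (hdiag : ∀ i, 0 < R i i)
    (hirr : ∀ i j, ∃ k : ℕ, 1 ≤ k ∧ 0 < (R ^ k) i j)
    (u : Fin n → ℝ) (hu : ∀ i, 0 < u i)
    (huR : Matrix.vecMul u R = u) (husum : ∑ i, u i = 1) :
    ∃ c : ℝ, 0 < c ∧ c < 1 ∧ ∀ y : Fin n → ℝ, ∑ i, u i * y i = 0 →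
      ∑ i, u i * (∑ j, R i j * y j) ^ 2 ≤ c * ∑ j, u j * y j ^ 2 := by
  set f : (Fin n → ℝ) → ℝ := fun y => ∑ i, u i * (∑ j, R i j * y j) ^ 2 with hf
  set g : (Fin n → ℝ) → ℝ := fun y => ∑ j, u j * y j ^ 2 with hg
  have hfc : Continuous f := by fun_prop
  have hgc : Continuous g := by fun_prop
  have hgpos : ∀ y, y ≠ 0 → 0 < g y := by
    intro y hy
    obtain ⟨i, hi⟩ := Function.ne_iff.1 hy
    refine Finset.sum_pos' (fun j _ => mul_nonneg (hu j).le (sq_nonneg _))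
      ⟨i, Finset.mem_univ _, mul_pos (hu i) ?_⟩
    exact sq_pos_iff.2 (by simpa using hi)
  set K : Set (Fin n → ℝ) := Metric.sphere 0 1 ∩ {y | ∑ i, u i * y i = 0} with hK
  have hKc : IsCompact K := (isCompact_sphere _ _).inter_right
    (isClosed_eq (by fun_prop) (by fun_prop))
  have hKne : ∀ y ∈ K, y ≠ 0 := by
    rintro y ⟨h, -⟩ rfl
    simp at h
  have key : ∃ c : ℝ, 0 < c ∧ c < 1 ∧ ∀ y ∈ K, f y ≤ c * g y := by
    rcases K.eq_empty_or_nonempty with h | h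
    · exact ⟨1/2, by norm_num, by norm_num, by simp [h]⟩
    · obtain ⟨z, hz, hmax⟩ := hKc.exists_isMaxOn h (f := fun y => f y / g y)
        (hfc.continuousOn.div hgc.continuousOn fun y hy => (hgpos y (hKne y hy)).ne')
      refine ⟨max (1/2) (f z / g z), by positivity, max_lt (by norm_num) ?_, ?_⟩
      · rw [div_lt_one (hgpos z (hKne z hz))]
        exact strict_contr R hnonneg hrow hdiag hirr u hu huR husum z (hKne z hz) hz.2
      · intro y hy
        rw [← div_le_iff₀ (hgpos y (hKne y hy))]
        exact (hmax hy).trans (le_max_right _ _)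
  obtain ⟨c, hc0, hc1, hc⟩ := key
  refine ⟨c, hc0, hc1, fun y hy => ?_⟩
  change f y ≤ c * g y
  by_cases h0 : y = 0
  · subst h0
    simp [hf, hg]
  have hn : ‖y‖ ≠ 0 := norm_ne_zero_iff.2 h0
  have hfs : ∀ (a : ℝ), f (a • y) = a ^ 2 * f y := by
    intro a
    simp only [hf, Pi.smul_apply, smul_eq_mul, Finset.mul_sum]
    refine Finset.sum_congr rfl fun i _ => ?_
    have : ∑ j, R i j * (a * y j) = a * ∑ j, R i j * y j := by
      rw [Finset.mul_sum]; exact Finset.sum_congr rfl fun j _ => by ring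
    rw [this]; ring
  have hgs : ∀ (a : ℝ), g (a • y) = a ^ 2 * g y := by
    intro a
    simp only [hg, Pi.smul_apply, smul_eq_mul, Finset.mul_sum]
    exact Finset.sum_congr rfl fun i _ => by ring
  have hmem : ‖y‖⁻¹ • y ∈ K := by
    refine ⟨by simp [norm_smul, hn], ?_⟩
    have : ∑ i, u i * (‖y‖⁻¹ * y i) = ‖y‖⁻¹ * ∑ i, u i * y i := by
      rw [Finset.mul_sum]; exact Finset.sum_congr rfl fun j _ => by ring
    simp [this, hy]
  have h := hc _ hmem
  rw [hfs, hgs] at h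
  have hp : 0 < (‖y‖⁻¹) ^ 2 := by positivity
  refine le_of_mul_le_mul_left ?_ hp
  linarith

lemma frobNormW_eq {n q : ℕ} (u : Fin n → ℝ) (hu : ∀ i, 0 < u i)
    (A : Matrix (Fin n) (Fin q) ℝ) :
    frobNormW u A = Real.sqrt (∑ j, ∑ i, u i * A i j ^ 2) := by
  unfold frobNormW frobNorm
  rw [Finset.sum_comm]
  simp_rw [Matrix.diagonal_mul, mul_pow, Real.sq_sqrt (hu _).le]

/-- for a nonnegative, row-stochastic, irreducible matrix `R` with
positive diagonal and positive normalized left eigenvector `u`, there is a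
contraction factor `σ_R ∈ (0,1)` with
`‖R x − 1 uᵀ x‖_F^u ≤ σ_R ‖x − 1 uᵀ x‖_F^u` for every matrix `x`. -/
theorem stmt_4 (n : ℕ) (hn : 0 < n) (R : Matrix (Fin n) (Fin n) ℝ)
    (hnonneg : ∀ i j, 0 ≤ R i j)
    (hrow : ∀ i, ∑ j, R i j = 1)
    (hdiag : ∀ i, 0 < R i i)
    (hirr : ∀ i j, ∃ k : ℕ, 1 ≤ k ∧ 0 < (R ^ k) i j)
    (u : Fin n → ℝ) (hu : ∀ i, 0 < u i)
    (huR : Matrix.vecMul u R = u) (husum : ∑ i, u i = 1) :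
    ∃ σR : ℝ, 0 < σR ∧ σR < 1 ∧
      ∀ (q : ℕ) (x : Matrix (Fin n) (Fin q) ℝ),
        frobNormW u (R * x - Matrix.of (fun _ j => u j) * x) ≤
          σR * frobNormW u (x - Matrix.of (fun _ j => u j) * x) := by

  obtain ⟨c, hc0, hc1, hc⟩ := exists_contr R hnonneg hrow hdiag hirr u hu huR husum
  refine ⟨Real.sqrt c, Real.sqrt_pos.2 hc0, by rw [Real.sqrt_lt' one_pos]; simpa using hc1, ?_⟩
  intro q x
  rw [frobNormW_eq u hu, frobNormW_eq u hu, ← Real.sqrt_mul hc0.le]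
  apply Real.sqrt_le_sqrt
  rw [Finset.mul_sum]
  refine Finset.sum_le_sum fun j _ => ?_
  set m : ℝ := ∑ l, u l * x l j with hm
  have h := hc (fun i => x i j - m) (by
    simp_rw [mul_sub]
    rw [Finset.sum_sub_distrib, ← Finset.sum_mul, husum, ← hm]; ring)
  have h2 : ∀ i, ∑ l, R i l * (x l j - m) = (∑ l, R i l * x l j) - m := by
    intro i
    simp_rw [mul_sub]
    rw [Finset.sum_sub_distrib, ← Finset.sum_mul, hrow, one_mul]
  simp only [h2] at h
  simpa only [Matrix.sub_apply, Matrix.mul_apply, Matrix.of_apply] using h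
end

section
/- Let C ∈ ℝ^{m×m} be nonnegative, column-stochastic (1^T C = 1^T), with positive diagonal entries and irreducible, and let v ∈ ℝ^m be its positive right eigenvector with C v = v and 1^T v = 1. Then there exists a constant σ_C with 0 < σ_C < 1 such that for every p ∈ ℕ and every matrix y ∈ ℝ^{m×p}: ‖C y − v 1^T y‖_F^v ≤ σ_C · ‖y − v 1^T y‖_F^v. -/
/-- The weighted Frobenius norm `‖B‖_F^v = ‖diag(√v)⁻¹ B‖_F`. -/
noncomputable def frobNormWinv {n q : Type*} [Fintype n] [Fintype q] [DecidableEq n]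
    (w : n → ℝ) (A : Matrix n q ℝ) : ℝ :=
  frobNorm (Matrix.diagonal (fun i => (Real.sqrt (w i))⁻¹) * A)

/-- The weighted square norm of a vector. -/
noncomputable def wQ {m : ℕ} (v x : Fin m → ℝ) : ℝ := ∑ i, x i ^ 2 / v i

lemma wQ_deficit {m : ℕ} (C : Matrix (Fin m) (Fin m) ℝ)
    (hcol : ∀ j, ∑ i, C i j = 1)
    (v : Fin m → ℝ) (hv : ∀ i, 0 < v i)
    (hvC : C.mulVec v = v) (x : Fin m → ℝ) :
    wQ v x - wQ v (C.mulVec x) =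
      ∑ i, ∑ j, C i j * v j * (x j / v j - C.mulVec x i / v i) ^ 2 := by
  have h1 : wQ v x = ∑ i, ∑ j, C i j * (x j ^ 2 / v j) := by
    rw [Finset.sum_comm]
    simp only [← Finset.sum_mul, hcol, one_mul]
    rfl
  rw [h1, wQ, ← Finset.sum_sub_distrib]
  refine Finset.sum_congr rfl fun i _ => ?_
  have hb : ∑ j, C i j * x j = C.mulVec x i := rfl
  have hb2 : ∑ j, C i j * v j = v i := congrFun hvC i
  have hvi := (hv i).ne'
  generalize C.mulVec x i = b at *
  have : ∀ j, C i j * v j * (x j / v j - b / v i) ^ 2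
      = C i j * (x j ^ 2 / v j) - 2 * (b / v i) * (C i j * x j)
        + (b / v i) ^ 2 * (C i j * v j) := by
    intro j
    have := (hv j).ne'
    field_simp
    ring
  simp only [this, Finset.sum_add_distrib, Finset.sum_sub_distrib, ← Finset.mul_sum, hb, hb2]
  field_simp
  ring

lemma wQ_lt {m : ℕ} (C : Matrix (Fin m) (Fin m) ℝ)
    (hnonneg : ∀ i j, 0 ≤ C i j)
    (hcol : ∀ j, ∑ i, C i j = 1)
    (hdiag : ∀ i, 0 < C i i)
    (hirr : ∀ i j, ∃ k : ℕ, 1 ≤ k ∧ 0 < (C ^ k) i j)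
    (v : Fin m → ℝ) (hv : ∀ i, 0 < v i)
    (hvC : C.mulVec v = v) (hvsum : ∑ i, v i = 1) (x : Fin m → ℝ)
    (hx : ∑ i, x i = 0) (hx0 : x ≠ 0) : wQ v (C.mulVec x) < wQ v x := by
  have hd := wQ_deficit C hcol v hv hvC x
  have hn : ∀ i j, 0 ≤ C i j * v j * (x j / v j - C.mulVec x i / v i) ^ 2 := fun i j =>
    mul_nonneg (mul_nonneg (hnonneg i j) (hv j).le) (sq_nonneg _)
  by_contra hlt
  have h0 : ∑ i, ∑ j, C i j * v j * (x j / v j - C.mulVec x i / v i) ^ 2 = 0 :=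
    le_antisymm (by linarith)
      (Finset.sum_nonneg fun i _ => Finset.sum_nonneg fun j _ => hn i j)
  have h1 : ∀ i j, C i j * v j * (x j / v j - C.mulVec x i / v i) ^ 2 = 0 := by
    intro i j
    have h2 := (Finset.sum_eq_zero_iff_of_nonneg
      (fun i _ => Finset.sum_nonneg fun j _ => hn i j)).1 h0 i (Finset.mem_univ i)
    exact (Finset.sum_eq_zero_iff_of_nonneg (fun j _ => hn i j)).1 h2 j (Finset.mem_univ j)
  have h2 : ∀ i j, 0 < C i j → x j / v j = C.mulVec x i / v i := by
    intro i j hC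
    have h3 := h1 i j
    rcases mul_eq_zero.1 h3 with h | h
    · exact absurd h (mul_pos hC (hv j)).ne'
    · exact sub_eq_zero.1 (pow_eq_zero_iff (two_ne_zero) |>.1 h)
  have h3 : ∀ i j, 0 < C i j → x i / v i = x j / v j := fun i j hC =>
    (h2 i i (hdiag i)).trans (h2 i j hC).symm
  have h4 : ∀ k : ℕ, ∀ i j, (C ^ k) i j ≠ 0 → x i / v i = x j / v j := by
    intro k
    induction k with
    | zero =>
      intro i j h
      rw [pow_zero, Matrix.one_apply] at h
      have : i = j := by
        by_contra hij
        simp [hij] at h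
      rw [this]
    | succ k ih =>
      intro i j h
      rw [pow_succ, Matrix.mul_apply] at h
      obtain ⟨l, -, hl⟩ := Finset.exists_ne_zero_of_sum_ne_zero h
      have hl1 := left_ne_zero_of_mul hl
      have hl2 := right_ne_zero_of_mul hl
      exact (ih i l hl1).trans (h3 l j (lt_of_le_of_ne (hnonneg l j) hl2.symm))
  apply hx0
  funext i
  have h5 : ∀ j, x j = x i / v i * v j := by
    intro j
    obtain ⟨k, -, hk⟩ := hirr i j
    rw [h4 k i j hk.ne', div_mul_cancel₀ _ (hv j).ne']
  have h6 : x i / v i = 0 := by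
    have : ∑ j, x j = x i / v i * ∑ j, v j := by
      rw [Finset.mul_sum]
      exact Finset.sum_congr rfl fun j _ => h5 j
    rw [hx, hvsum, mul_one] at this
    exact this.symm
  rw [h5 i, h6, zero_mul]
  rfl

lemma wQ_smul {m : ℕ} (v x : Fin m → ℝ) (c : ℝ) : wQ v (c • x) = c ^ 2 * wQ v x := by
  simp only [wQ, Finset.mul_sum, Pi.smul_apply, smul_eq_mul]
  refine Finset.sum_congr rfl fun i _ => ?_
  ring

lemma wQ_continuous {m : ℕ} (v : Fin m → ℝ) : Continuous (wQ v) := by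
  unfold wQ
  refine continuous_finsetSum _ fun i _ => ?_
  exact ((continuous_apply i).pow 2).div_const _

lemma wQ_nonneg {m : ℕ} (v : Fin m → ℝ) (hv : ∀ i, 0 < v i) (x : Fin m → ℝ) : 0 ≤ wQ v x :=
  Finset.sum_nonneg fun i _ => div_nonneg (sq_nonneg _) (hv i).le

lemma wQ_pos {m : ℕ} (v : Fin m → ℝ) (hv : ∀ i, 0 < v i) (x : Fin m → ℝ) (hx : x ≠ 0) :
    0 < wQ v x := by
  obtain ⟨i, hi⟩ := Function.ne_iff.1 hx
  refine Finset.sum_pos' (fun i _ => div_nonneg (sq_nonneg _) (hv i).le)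
    ⟨i, Finset.mem_univ i, div_pos ?_ (hv i)⟩
  exact sq_pos_of_ne_zero hi

lemma exists_contr_s5 {m : ℕ} (C : Matrix (Fin m) (Fin m) ℝ)
    (hnonneg : ∀ i j, 0 ≤ C i j)
    (hcol : ∀ j, ∑ i, C i j = 1)
    (hdiag : ∀ i, 0 < C i i)
    (hirr : ∀ i j, ∃ k : ℕ, 1 ≤ k ∧ 0 < (C ^ k) i j)
    (v : Fin m → ℝ) (hv : ∀ i, 0 < v i)
    (hvC : C.mulVec v = v) (hvsum : ∑ i, v i = 1) :
    ∃ s : ℝ, 0 < s ∧ s < 1 ∧ ∀ x : Fin m → ℝ, ∑ i, x i = 0 →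
      wQ v (C.mulVec x) ≤ s * wQ v x := by
  let S : Set (Fin m → ℝ) := {x | ∑ i, x i = 0} ∩ Metric.sphere 0 1
  have hS : IsCompact S := by
    refine (isCompact_sphere (0 : Fin m → ℝ) 1).inter_left ?_
    exact isClosed_eq (continuous_finsetSum _ fun i _ => continuous_apply i) continuous_const
  have hS0 : ∀ x ∈ S, x ≠ 0 := by
    rintro x ⟨-, hx⟩ rfl
    simp at hx
  have hb : ∃ t : ℝ, t < 1 ∧ ∀ x ∈ S, wQ v (C.mulVec x) / wQ v x ≤ t := by
    rcases S.eq_empty_or_nonempty with h | h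
    · exact ⟨0, one_pos, by simp [h]⟩
    · obtain ⟨z, hz, hmax⟩ := hS.exists_isMaxOn h
        (f := fun x => wQ v (C.mulVec x) / wQ v x) (by
          refine ContinuousOn.div ?_ (wQ_continuous v).continuousOn
            (fun x hx => (wQ_pos v hv x (hS0 x hx)).ne')
          exact ((wQ_continuous v).comp
            (Continuous.matrix_mulVec continuous_const continuous_id)).continuousOn)
      refine ⟨_, ?_, fun x hx => hmax hx⟩
      rw [div_lt_one (wQ_pos v hv z (hS0 z hz))]
      exact wQ_lt C hnonneg hcol hdiag hirr v hv hvC hvsum z hz.1 (hS0 z hz)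
  obtain ⟨t, ht, hb⟩ := hb
  refine ⟨max t (1 / 2), by positivity, max_lt ht (by norm_num), fun x hx => ?_⟩
  by_cases hx0 : x = 0
  · subst hx0
    simp [wQ]
  have hn : 0 < ‖x‖ := norm_pos_iff.2 hx0
  have hmem : ‖x‖⁻¹ • x ∈ S := by
    refine ⟨?_, ?_⟩
    · simp [← Finset.mul_sum, hx]
    · simp [norm_smul, hn.ne']
  have h := hb _ hmem
  rw [Matrix.mulVec_smul, wQ_smul, wQ_smul, mul_div_mul_left _ _ (by positivity),
    div_le_iff₀ (wQ_pos v hv x hx0)] at h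
  exact h.trans (mul_le_mul_of_nonneg_right (le_max_left _ _) (wQ_nonneg v hv x))

lemma frob_eq {m p : ℕ} (v : Fin m → ℝ) (hv : ∀ i, 0 < v i) (A : Matrix (Fin m) (Fin p) ℝ) :
    frobNormWinv v A = Real.sqrt (∑ j, wQ v (fun i => A i j)) := by
  unfold frobNormWinv frobNorm wQ
  rw [Finset.sum_comm]
  congr 1
  refine Finset.sum_congr rfl fun j _ => Finset.sum_congr rfl fun i _ => ?_
  rw [Matrix.diagonal_mul, mul_pow, inv_pow, Real.sq_sqrt (hv i).le, div_eq_inv_mul]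

/-- for a nonnegative, column-stochastic, irreducible matrix `C`
with positive diagonal and positive normalized right eigenvector `v`, there is
a contraction factor `σ_C ∈ (0,1)` with
`‖C y − v 1ᵀ y‖_F^v ≤ σ_C ‖y − v 1ᵀ y‖_F^v` for every matrix `y`. -/
theorem stmt_5 (m : ℕ) (hm : 0 < m) (C : Matrix (Fin m) (Fin m) ℝ)
    (hnonneg : ∀ i j, 0 ≤ C i j)
    (hcol : ∀ j, ∑ i, C i j = 1)
    (hdiag : ∀ i, 0 < C i i)
    (hirr : ∀ i j, ∃ k : ℕ, 1 ≤ k ∧ 0 < (C ^ k) i j)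
    (v : Fin m → ℝ) (hv : ∀ i, 0 < v i)
    (hvC : C.mulVec v = v) (hvsum : ∑ i, v i = 1) :
    ∃ σC : ℝ, 0 < σC ∧ σC < 1 ∧
      ∀ (p : ℕ) (y : Matrix (Fin m) (Fin p) ℝ),
        frobNormWinv v (C * y - Matrix.of (fun i _ => v i) * y) ≤
          σC * frobNormWinv v (y - Matrix.of (fun i _ => v i) * y) := by
  obtain ⟨s, hs0, hs1, hs⟩ := exists_contr_s5 C hnonneg hcol hdiag hirr v hv hvC hvsum
  refine ⟨Real.sqrt s, Real.sqrt_pos.2 hs0, ?_, fun p y => ?_⟩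
  · rw [Real.sqrt_lt' one_pos]
    simpa using hs1
  rw [frob_eq v hv, frob_eq v hv, ← Real.sqrt_mul hs0.le, Finset.mul_sum]
  refine Real.sqrt_le_sqrt (Finset.sum_le_sum fun j _ => ?_)
  have key : (fun i => (C * y - Matrix.of (fun i (_ : Fin m) => v i) * y : Matrix (Fin m) (Fin p) ℝ) i j)
      = C.mulVec (fun i => (y - Matrix.of (fun i (_ : Fin m) => v i) * y : Matrix (Fin m) (Fin p) ℝ) i j) := by
    have hCV : C * Matrix.of (fun i (_ : Fin m) => v i) = Matrix.of (fun i _ => v i) := by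
      ext i k
      exact congrFun hvC i
    have : C * y - Matrix.of (fun i (_ : Fin m) => v i) * y
        = C * (y - Matrix.of (fun i (_ : Fin m) => v i) * y) := by
      rw [Matrix.mul_sub, ← Matrix.mul_assoc, hCV]
    rw [this]
    rfl
  change wQ v (fun i => (C * y - Matrix.of (fun i (_ : Fin m) => v i) * y :
      Matrix (Fin m) (Fin p) ℝ) i j) ≤
    s * wQ v (fun i => (y - Matrix.of (fun i (_ : Fin m) => v i) * y :
      Matrix (Fin m) (Fin p) ℝ) i j)
  rw [key]
  apply hs
  simp only [Matrix.sub_apply, Matrix.mul_apply, Matrix.of_apply, ← Finset.mul_sum,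
    Finset.sum_sub_distrib, ← Finset.sum_mul, hvsum, one_mul, sub_self]
end
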